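/- Let n ≥ 2 and let Ω ⊂ ℝ^n be an open, bounded, (η, r₀)-Reifenberg flat set with 0 < η < 1/4. Then for every x ∈ ∂Ω and every 0 < r < r₀ there exists a unit vector ν ∈ ℝ^n such that the closed ball of radius r/8 centered at x + (1/8 + η) r ν is contained in ℝ^n \ Ω; moreover the distance from x to this closed ball equals η r. -/

import Mathlib

open Metric Set RealInnerProductSpace

/-- `Ω ⊆ ℝⁿ` is `(η, r₀)`-Reifenberg flat: for every boundary point `x` and scale
`0 < r < r₀` there is a hyperplane through `x` (given by a unit normal `ν`) that
approximates `∂Ω` in `B_r(x)` up to Hausdorff distance `η r`, and the two connected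
components of `{y ∈ B_r(x) : dist(y, H) ≥ 2ηr}` lie in `Ω` and `Ωᶜ` respectively. -/
def ReifenbergFlat {n : ℕ} (Ω : Set (EuclideanSpace ℝ (Fin n))) (η r₀ : ℝ) : Prop :=
  ∀ x ∈ frontier Ω, ∀ r : ℝ, 0 < r → r < r₀ →
    ∃ ν : EuclideanSpace ℝ (Fin n), ‖ν‖ = 1 ∧
      Metric.hausdorffDist (frontier Ω ∩ ball x r)
        ({y | ⟪y - x, ν⟫ = 0} ∩ ball x r) ≤ η * r ∧
      {y | y ∈ ball x r ∧ 2 * η * r ≤ ⟪y - x, ν⟫} ⊆ Ω ∧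
      {y | y ∈ ball x r ∧ ⟪y - x, ν⟫ ≤ -(2 * η * r)} ⊆ Ωᶜ

/-!
Let `ν` be the outer unit normal of the hyperplane `H` approximating `∂Ω` in `B_r(x)`. Since `∂Ω`
stays within `η r` of `H`, it misses the convex cap of `B_r(x)` lying at height more than `η r`
above `H` in the direction `ν`. The cap is connected and, as `η < 1/2`, contains a point at height
at least `2 η r`, which is not in `Ω`; hence the whole cap avoids `Ω`. The open ball inscribed in
the cap avoids `Ω` as well, and so does its closure because `Ω` is open.
-/

theorem subset_of_isPreconnected_of_disjoint_frontier {X : Type*} [TopologicalSpace X]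
    {s t : Set X} (hs : IsPreconnected s) (hst : Disjoint s (frontier t))
    (hne : (s ∩ t).Nonempty) : s ⊆ t := by
  have hcover : s ⊆ interior t ∪ interior tᶜ := by
    rw [← compl_frontier_eq_union_interior]
    exact hst.subset_compl_right
  have hdisj : Disjoint (interior t) (interior tᶜ) :=
    disjoint_compl_right.mono interior_subset interior_subset
  obtain ⟨p, hps, hpt⟩ := hne
  have hp : p ∈ interior t :=
    (hcover hps).resolve_right fun hp => interior_subset hp hpt
  exact (hs.subset_left_of_subset_union isOpen_interior isOpen_interior hdisj hcover
    ⟨p, hps, hp⟩).trans interior_subset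

theorem infDist_closedBall_eq_dist_sub {E : Type*} [SeminormedAddCommGroup E] [NormedSpace ℝ E]
    {x c : E} {s : ℝ} (hs : 0 ≤ s) (hsx : s ≤ dist x c) :
    infDist x (closedBall c s) = dist x c - s := by
  apply le_antisymm
  · obtain ⟨y, hxy, hyc⟩ := exists_dist_le_le (sub_nonneg.2 hsx) hs
      (show dist x c ≤ s + (dist x c - s) by rw [add_sub_cancel])
    exact (infDist_le_dist_of_mem (mem_closedBall.2 hyc)).trans hxy
  · refine (le_infDist (nonempty_closedBall.2 hs)).2 fun y hy => ?_
    linarith [dist_triangle x y c, mem_closedBall.1 hy]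

theorem dist_self_add_smul_of_norm_eq_one {E : Type*} [SeminormedAddCommGroup E]
    [NormedSpace ℝ E] {ν : E} (hν : ‖ν‖ = 1) (x : E) {a : ℝ} (ha : 0 ≤ a) :
    dist x (x + a • ν) = a := by
  rw [dist_self_add_right, norm_smul_of_nonneg ha, hν, mul_one]

section InnerProductSpace

variable {E : Type*} [SeminormedAddCommGroup E] [InnerProductSpace ℝ E] {x y ν : E} {r : ℝ}

theorem inner_add_smul_sub_self_of_norm_eq_one (hν : ‖ν‖ = 1) (x : E) (a : ℝ) :
    ⟪x + a • ν - x, ν⟫ = a := by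
  rw [add_sub_cancel_left, real_inner_smul_left, real_inner_self_eq_norm_sq, hν,
    one_pow, mul_one]

theorem abs_inner_sub_le_infDist_of_subset_hyperplane {s : Set E} (hν : ‖ν‖ ≤ 1)
    (hne : s.Nonempty) (hs : s ⊆ {z | ⟪z - x, ν⟫ = 0}) (y : E) :
    |⟪y - x, ν⟫| ≤ infDist y s := by
  refine (le_infDist hne).2 fun z hz => ?_
  have hzx : ⟪z - x, ν⟫ = 0 := hs hz
  calc |⟪y - x, ν⟫|
      = |⟪y - z, ν⟫| := by
        rw [← sub_add_sub_cancel y z x, inner_add_left, hzx, add_zero]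
    _ ≤ ‖y - z‖ * ‖ν‖ := abs_real_inner_le_norm _ _
    _ ≤ dist y z := by
        rw [dist_eq_norm]
        exact mul_le_of_le_one_right (norm_nonneg _) hν

theorem abs_inner_sub_le_hausdorffDist_hyperplane {A : Set E} (hν : ‖ν‖ ≤ 1)
    (hyA : y ∈ A) (hy : y ∈ ball x r) :
    |⟪y - x, ν⟫| ≤ hausdorffDist (A ∩ ball x r) ({z | ⟪z - x, ν⟫ = 0} ∩ ball x r) := by
  have hplane : ({z | ⟪z - x, ν⟫ = 0} ∩ ball x r).Nonempty :=
    ⟨x, by simp, mem_ball_self (pos_of_mem_ball hy)⟩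
  have hfinite :
      hausdorffEDist (A ∩ ball x r) ({z | ⟪z - x, ν⟫ = 0} ∩ ball x r) ≠ ⊤ :=
    hausdorffEDist_ne_top_of_nonempty_of_bounded ⟨y, hyA, hy⟩ hplane
      (isBounded_ball.subset inter_subset_right) (isBounded_ball.subset inter_subset_right)
  exact (abs_inner_sub_le_infDist_of_subset_hyperplane hν hplane inter_subset_left y).trans
    (infDist_le_hausdorffDist_of_mem ⟨hyA, hy⟩ hfinite)

/-- The open cap of `ball x r` at height more than `t` above the hyperplane through `x` with
normal `ν`. -/
def openCap (x ν : E) (r t : ℝ) : Set E :=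
  ball x r ∩ {y | t < ⟪y - x, ν⟫}

theorem convex_openCap (x ν : E) (r t : ℝ) : Convex ℝ (openCap x ν r t) := by
  have hhalf : {y | t < ⟪y - x, ν⟫} = {y | t + ⟪ν, x⟫ < innerₛₗ ℝ ν y} := by
    ext y
    simp only [mem_ofPred_eq, real_inner_comm ν, inner_sub_right, innerₛₗ_apply_apply,
      lt_sub_iff_add_lt]
  rw [openCap, hhalf]
  exact (convex_ball x r).inter (convex_halfSpace_gt (innerₛₗ ℝ ν).isLinear _)

theorem add_smul_mem_openCap {t a : ℝ} (hν : ‖ν‖ = 1) (ha : 0 ≤ a) (hta : t < a) (har : a < r) :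
    x + a • ν ∈ openCap x ν r t := by
  refine ⟨?_, ?_⟩
  · rwa [mem_ball', dist_self_add_smul_of_norm_eq_one hν x ha]
  · rwa [mem_ofPred_eq, inner_add_smul_sub_self_of_norm_eq_one hν]

theorem ball_subset_openCap {s t : ℝ} (hν : ‖ν‖ = 1) (hst : 0 ≤ s + t) (hr : 2 * s + t ≤ r) :
    ball (x + (s + t) • ν) s ⊆ openCap x ν r t := by
  intro y hy
  have hcx := dist_self_add_smul_of_norm_eq_one hν x hst
  have hcν := inner_add_smul_sub_self_of_norm_eq_one hν x (s + t)
  set c := x + (s + t) • ν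
  rw [mem_ball] at hy
  refine ⟨?_, ?_⟩
  · rw [mem_ball]
    linarith [dist_triangle_right y x c]
  · have hyc : |⟪y - c, ν⟫| ≤ dist y c := by
      simpa only [hν, mul_one, dist_eq_norm] using abs_real_inner_le_norm (y - c) ν
    rw [mem_ofPred_eq, ← sub_add_sub_cancel y c x, inner_add_left, hcν]
    linarith [neg_le_of_abs_le hyc]

theorem disjoint_openCap_of_hausdorffDist_le {A : Set E} {t : ℝ} (hν : ‖ν‖ ≤ 1)
    (hA : hausdorffDist (A ∩ ball x r) ({y | ⟪y - x, ν⟫ = 0} ∩ ball x r) ≤ t) :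
    Disjoint (openCap x ν r t) A := by
  refine disjoint_left.2 fun y hycap hyA => ?_
  have hheight : ⟪y - x, ν⟫ ≤ t := (le_abs_self _).trans
    ((abs_inner_sub_le_hausdorffDist_hyperplane hν hyA hycap.1).trans hA)
  exact hheight.not_gt hycap.2

/-- The exterior half of Reifenberg flatness, in any real inner product space: at each boundary
point and scale `r < r₀` some hyperplane approximates the boundary up to Hausdorff distance `η r`,
and the points at height at least `2 η r` above it lie outside `Ω`. The normal `ν` points out of
`Ω`, whereas the one in `ReifenbergFlat` points into `Ω`. -/
def ExteriorReifenbergFlat (Ω : Set E) (η r₀ : ℝ) : Prop :=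
  ∀ x ∈ frontier Ω, ∀ r : ℝ, 0 < r → r < r₀ →
    ∃ ν : E, ‖ν‖ = 1 ∧
      hausdorffDist (frontier Ω ∩ ball x r) ({y | ⟪y - x, ν⟫ = 0} ∩ ball x r) ≤ η * r ∧
      {y | y ∈ ball x r ∧ 2 * η * r ≤ ⟪y - x, ν⟫} ⊆ Ωᶜ

variable {Ω : Set E} {η : ℝ}

theorem openCap_subset_compl (hν : ‖ν‖ = 1) (hr : 0 < r) (hη : η < 1 / 2)
    (hflat : hausdorffDist (frontier Ω ∩ ball x r) ({y | ⟪y - x, ν⟫ = 0} ∩ ball x r) ≤ η * r)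
    (hext : {y | y ∈ ball x r ∧ 2 * η * r ≤ ⟪y - x, ν⟫} ⊆ Ωᶜ) :
    openCap x ν r (η * r) ⊆ Ωᶜ := by
  have hηr : 0 ≤ η * r := hausdorffDist_nonneg.trans hflat
  have hηr' : η * r < r / 2 := by nlinarith
  have hp : x + (η * r + r / 2) • ν ∈ openCap x ν r (η * r) :=
    add_smul_mem_openCap hν (by linarith) (by linarith) (by linarith)
  have hpΩ : x + (η * r + r / 2) • ν ∈ Ωᶜ := by
    refine hext ⟨hp.1, ?_⟩
    rw [inner_add_smul_sub_self_of_norm_eq_one hν]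
    linarith
  refine subset_of_isPreconnected_of_disjoint_frontier (convex_openCap x ν r _).isPreconnected ?_
    ⟨_, hp, hpΩ⟩
  rw [frontier_compl]
  exact disjoint_openCap_of_hausdorffDist_le hν.le hflat

theorem exterior_ball_condition_general {r₀ δ : ℝ} (hΩ : IsOpen Ω) (hη : η < 1 / 2)
    (hδ : 0 < δ) (hδη : 2 * δ + η ≤ 1) (hflat : ExteriorReifenbergFlat Ω η r₀) :
    ∀ x ∈ frontier Ω, ∀ r : ℝ, 0 < r → r < r₀ →
      ∃ ν : E, ‖ν‖ = 1 ∧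
        closedBall (x + ((δ + η) * r) • ν) (δ * r) ⊆ Ωᶜ ∧
        infDist x (closedBall (x + ((δ + η) * r) • ν) (δ * r)) = η * r := by
  intro x hx r hr hrr₀
  obtain ⟨ν, hν, hdist, hext⟩ := hflat x hx r hr hrr₀
  have hηr : 0 ≤ η * r := hausdorffDist_nonneg.trans hdist
  have hδr : 0 < δ * r := mul_pos hδ hr
  have hcentre := dist_self_add_smul_of_norm_eq_one hν x (add_nonneg hδr.le hηr)
  refine ⟨ν, hν, ?_, ?_⟩ <;> rw [add_mul]
  · rw [← closure_ball _ hδr.ne']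
    refine closure_minimal ?_ hΩ.isClosed_compl
    exact (ball_subset_openCap hν (by linarith) (by nlinarith)).trans
      (openCap_subset_compl hν hr hη hdist hext)
  · rw [infDist_closedBall_eq_dist_sub hδr.le (by linarith), hcentre, add_sub_cancel_left]

end InnerProductSpace

theorem ReifenbergFlat.exteriorReifenbergFlat {n : ℕ} {Ω : Set (EuclideanSpace ℝ (Fin n))}
    {η r₀ : ℝ} (h : ReifenbergFlat Ω η r₀) : ExteriorReifenbergFlat Ω η r₀ := by
  intro x hx r hr hrr₀
  obtain ⟨ν, hν, hdist, -, hext⟩ := h x hx r hr hrr₀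
  refine ⟨-ν, by rwa [norm_neg], ?_, ?_⟩
  · simpa only [inner_neg_right, neg_eq_zero] using hdist
  · simpa only [inner_neg_right, le_neg] using hext

theorem exterior_ball_condition (n : ℕ) (hn : 2 ≤ n)
    (Ω : Set (EuclideanSpace ℝ (Fin n))) (hΩo : IsOpen Ω)
    (hΩb : Bornology.IsBounded Ω) (η r₀ : ℝ) (hη0 : 0 < η) (hη : η < 1/4)
    (hr₀ : 0 < r₀) (hRF : ReifenbergFlat Ω η r₀) :
    ∀ x ∈ frontier Ω, ∀ r : ℝ, 0 < r → r < r₀ →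
      ∃ ν : EuclideanSpace ℝ (Fin n), ‖ν‖ = 1 ∧
        closedBall (x + ((1/8 + η) * r) • ν) (r/8) ⊆ Ωᶜ ∧
        Metric.infDist x (closedBall (x + ((1/8 + η) * r) • ν) (r/8)) = η * r := by
  simpa only [one_div_mul_eq_div] using exterior_ball_condition_general hΩo
    (by linarith) (δ := 1 / 8) (by norm_num) (by linarith) hRF.exteriorReifenbergFlat
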